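/- arXiv:math-ph/0201008 — 2 statements merged into one kernel-verified Lean document; each statement's English description precedes it below -/
import Mathlib

section
/- Let ω > 0 and let f : ℝ → ℝ be given by a finite Fourier series f(t) = Σ_{n∈ℤ} F_n e^{inωt} (only finitely many F_n nonzero, f real-valued). Set Q₀(t) = exp(2i·∫₀ᵗ f(τ) dτ) and, assuming the mean values M(Q₀) and M(conj Q₀) exist, set Q₁(t) = Q₀(t)·∫₀ᵗ (conj(Q₀(τ)) − M(conj Q₀)) dτ. Assume that either (I) M(Q₀) ≠ 0, or (II) M(Q₀) = 0 and the mean value M(Q₁) exists with M(Q₁) ≠ 0. Then there exists K > 0 such that for every real ε with |ε| < K the following holds: letting U : ℝ → Matrix 2×2 ℂ be the propagator, i.e., the unique solution of U'(t) = −i·(ε·σ₁ + f(t)·σ₃)·U(t) with U(0) = Id, there exist Ω ∈ ℝ and sequences 𝒰₁₁⁻, 𝒰₁₁⁺, 𝒰₁₂⁻, 𝒰₁₂⁺ : ℤ → ℂ, each absolutely summable, such that for all t ∈ ℝ: U₁₁(t) = e^{−iΩt}·Σ_{n∈ℤ} 𝒰₁₁⁻(n) e^{inωt} + e^{iΩt}·Σ_{n∈ℤ}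 𝒰₁₁⁺(n) e^{inωt}, U₁₂(t) = e^{−iΩt}·Σ_{n∈ℤ} 𝒰₁₂⁻(n) e^{inωt} + e^{iΩt}·Σ_{n∈ℤ} 𝒰₁₂⁺(n) e^{inωt}, U₂₁(t) = −conj(U₁₂(t)) and U₂₂(t) = conj(U₁₁(t)). -/
open Matrix Filter

noncomputable section

/-- The mean value `M(h)` of a function `h : ℝ → ℂ`:
`M(h) = L` iff `(1/(2T)) ∫_{-T}^{T} h(t) dt → L` as `T → +∞`. -/
def MeanValueIs (h : ℝ → ℂ) (L : ℂ) : Prop :=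
  Tendsto (fun T : ℝ => (1 / (2 * T)) • ∫ t in (-T)..T, h t) atTop (nhds L)

/-- Absolutely convergent Fourier expansion of a `C¹` periodic function. -/
theorem flq_fourier (ω : ℝ) (hω : 0 < ω) (h h' : ℝ → ℂ)
    (hd : ∀ t, HasDerivAt h (h' t) t) (hc : Continuous h')
    (hp : Function.Periodic h (2 * Real.pi / ω)) :
    ∃ u : ℤ → ℂ, Summable (fun n => ‖u n‖) ∧
      ∀ t : ℝ, h t = ∑' n : ℤ, u n * Complex.exp (Complex.I * (n : ℂ) * (ω : ℂ) * (t : ℂ)) := by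
  set T : ℝ := 2 * Real.pi / ω with hTdef
  have hT : 0 < T := by positivity
  haveI : Fact (0 < T) := ⟨hT⟩
  have hcont : Continuous h := continuous_iff_continuousAt.2 fun t => (hd t).continuousAt
  let H : C(AddCircle T, ℂ) := ⟨hp.lift, hcont.quotient_lift _⟩
  have hHc : ∀ t : ℝ, H (t : AddCircle T) = h t := fun t => rfl
  have hab : (0:ℝ) < 0 + T := by simpa using hT
  have hcoef : ∀ n, fourierCoeff H n = fourierCoeffOn hab h n := by
    intro n
    rw [fourierCoeff_eq_intervalIntegral _ _ 0, fourierCoeffOn_eq_integral]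
    simp only [fourier_coe_apply, hHc]
    simp
  have hL2 : MeasureTheory.MemLp h' 2
      (MeasureTheory.volume.restrict (Set.Ioc (0:ℝ) (0 + T))) := by
    obtain ⟨C, hC⟩ := (isCompact_Icc (a := (0:ℝ)) (b := 0 + T)).exists_bound_of_continuousOn
      hc.continuousOn
    refine MeasureTheory.MemLp.of_bound hc.aestronglyMeasurable C ?_
    refine (MeasureTheory.ae_restrict_iff' measurableSet_Ioc).2 (Eventually.of_forall ?_)
    intro x hx
    exact hC x ⟨hx.1.le, hx.2⟩
  have hsq := (hasSum_sq_fourierCoeffOn hab hL2).summable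
  have hinv : Summable (fun n : ℤ => 1 / (n : ℝ) ^ 2) :=
    Real.summable_one_div_int_pow.2 (by norm_num)
  have hsum : Summable (fun n => ‖fourierCoeff H n‖) := by
    have hmaj : Summable (fun n : ℤ => ‖fourierCoeffOn hab h' n‖ ^ 2 + T ^ 2 * (1 / (n : ℝ) ^ 2)
        + (if n = 0 then ‖fourierCoeff H 0‖ else 0)) := by
      refine (hsq.add (hinv.mul_left _)).add ?_
      exact summable_of_ne_finset_zero (s := {0}) (by intro b hb; simp at hb; simp [hb])
    refine Summable.of_nonneg_of_le (fun n => norm_nonneg _) (fun n => ?_) hmaj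
    by_cases hn : n = 0
    · subst hn
      simp
    · rw [hcoef, fourierCoeffOn_of_hasDerivAt hab hn (fun x _ => hd x)
        (hc.intervalIntegrable _ _)]
      have hper : h (0 + T) - h 0 = 0 := by rw [hp 0]; ring
      rw [hper]
      generalize fourierCoeffOn hab h' n = z
      simp only [hn, if_false, add_zero, zero_add, mul_zero, zero_sub, sub_zero,
        Complex.ofReal_zero]
      set c := ‖z‖ with hcdef
      have hn' : 0 < |(n : ℝ)| := abs_pos.2 (by exact_mod_cast hn)
      have e : ‖1 / (-2 * (Real.pi:ℂ) * Complex.I * n) * -((T:ℂ) * z)‖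
          = (1 / (2 * Real.pi)) * ((T * (1 / |(n:ℝ)|)) * c) := by
        simp [abs_of_pos Real.pi_pos, abs_of_pos hT]
        ring
      have e2 : (1 : ℝ) / (n:ℝ) ^ 2 = (1 / |(n:ℝ)|) ^ 2 := by
        rw [div_pow, sq_abs]; simp
      refine (le_of_eq e).trans ?_
      rw [e2, ← mul_pow]
      set q := T * (1 / |(n:ℝ)|)
      have hq : 0 ≤ q := by positivity
      have hc0 : 0 ≤ c := norm_nonneg _
      have hpi : 1 / (2 * Real.pi) ≤ 1 := by
        rw [div_le_one (by positivity)]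
        linarith [Real.pi_gt_three]
      have : (1 / (2 * Real.pi)) * (q * c) ≤ 1 * (q * c) :=
        mul_le_mul_of_nonneg_right hpi (by positivity)
      nlinarith [sq_nonneg (c - q), mul_nonneg hq hc0]
  refine ⟨fun n => fourierCoeff H n, hsum, fun t => ?_⟩
  have := (has_pointwise_sum_fourier_series_of_summable hsum.of_norm (t : AddCircle T)).tsum_eq
  rw [hHc] at this
  rw [← this]
  refine tsum_congr fun n => ?_
  rw [fourier_coe_apply, smul_eq_mul]
  congr 2
  have : (ω:ℂ) ≠ 0 := by exact_mod_cast hω.ne'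
  have hpi : (Real.pi : ℂ) ≠ 0 := by exact_mod_cast Real.pi_ne_zero
  rw [hTdef]
  push_cast
  field_simp

theorem flq_fourier_twist (ω : ℝ) (hω : 0 < ω) (g g' : ℝ → ℂ) (Ω : ℝ)
    (hd : ∀ t, HasDerivAt g (g' t) t) (hc : Continuous g')
    (hp : ∀ t, g (t + 2 * Real.pi / ω)
      = Complex.exp (Complex.I * (Ω : ℂ) * ((2 * Real.pi / ω : ℝ) : ℂ)) * g t) :
    ∃ u : ℤ → ℂ, Summable (fun n => ‖u n‖) ∧
      ∀ t : ℝ, g t = Complex.exp (Complex.I * (Ω : ℂ) * (t : ℂ)) *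
        ∑' n : ℤ, u n * Complex.exp (Complex.I * (n : ℂ) * (ω : ℂ) * (t : ℂ)) := by
  have hcont : Continuous g := continuous_iff_continuousAt.2 fun t => (hd t).continuousAt
  have hexp : ∀ t : ℝ, HasDerivAt (fun t : ℝ => Complex.exp (-(Complex.I * (Ω : ℂ)) * (t : ℂ)))
      (Complex.exp (-(Complex.I * (Ω : ℂ)) * (t : ℂ)) * (-(Complex.I * (Ω : ℂ)))) t := by
    intro t
    have h1 : HasDerivAt (fun t : ℝ => -(Complex.I * (Ω : ℂ)) * (t : ℂ))
        (-(Complex.I * (Ω : ℂ))) t := by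
      simpa using (Complex.ofRealCLM.hasDerivAt (x := t)).const_mul (-(Complex.I * (Ω : ℂ)))
    exact h1.cexp
  obtain ⟨u, hu, hs⟩ := flq_fourier ω hω
    (fun t => Complex.exp (-(Complex.I * (Ω : ℂ)) * (t : ℂ)) * g t) _
    (fun t => (hexp t).mul (hd t)) (by fun_prop) (by
      intro t
      simp only []
      rw [hp, ← mul_assoc, ← Complex.exp_add]
      congr 2
      push_cast
      ring)
  refine ⟨u, hu, fun t => ?_⟩
  rw [← hs t, ← mul_assoc, ← Complex.exp_add]
  have : Complex.I * (Ω : ℂ) * (t : ℂ) + -(Complex.I * (Ω : ℂ)) * (t : ℂ) = 0 := by ring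
  rw [this]; simp

theorem flq_decomp (ω : ℝ) (hω : 0 < ω) (g g' : ℝ → ℂ) (Ω : ℝ)
    (hd : ∀ t, HasDerivAt g (g' t) t) (hc : Continuous g')
    (l : ℂ) (hl : l = Complex.exp (Complex.I * (Ω : ℂ) * ((2 * Real.pi / ω : ℝ) : ℂ)))
    (m : ℂ) (hm : m = Complex.exp (Complex.I * ((-Ω : ℝ) : ℂ) * ((2 * Real.pi / ω : ℝ) : ℂ)))
    (hrec : ∀ t, g (t + 2 * Real.pi / ω + 2 * Real.pi / ω)
      = (l + m) * g (t + 2 * Real.pi / ω) - g t)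
    (hdeg : l = m → ∀ t, g (t + 2 * Real.pi / ω) = l * g t) :
    ∃ um up : ℤ → ℂ, Summable (fun n => ‖um n‖) ∧ Summable (fun n => ‖up n‖) ∧
      ∀ t : ℝ, g t = Complex.exp (-Complex.I * (Ω : ℂ) * (t : ℂ)) *
        (∑' n : ℤ, um n * Complex.exp (Complex.I * (n : ℂ) * (ω : ℂ) * (t : ℂ)))
        + Complex.exp (Complex.I * (Ω : ℂ) * (t : ℂ)) *
        (∑' n : ℤ, up n * Complex.exp (Complex.I * (n : ℂ) * (ω : ℂ) * (t : ℂ))) := by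
  have hlm : l * m = 1 := by
    rw [hl, hm, ← Complex.exp_add]
    rw [← Complex.exp_zero]
    congr 1
    push_cast
    ring
  by_cases hne : l = m
  · obtain ⟨u, hu, hs⟩ := flq_fourier_twist ω hω g g' Ω hd hc (fun t => hl ▸ hdeg hne t)
    exact ⟨fun _ => 0, u, by simpa using summable_zero, hu, fun t => by rw [hs t]; simp⟩
  · have hne' : l - m ≠ 0 := sub_ne_zero.2 hne
    have hsh : ∀ t, HasDerivAt (fun t => g (t + 2 * Real.pi / ω)) (g' (t + 2 * Real.pi / ω)) t :=
      fun t => (hd (t + 2 * Real.pi / ω)).comp_add_const t _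
    obtain ⟨up, hup, hsp⟩ := flq_fourier_twist ω hω
      (fun t => (g (t + 2 * Real.pi / ω) - m * g t) / (l - m)) _ Ω
      (fun t => ((hsh t).sub ((hd t).const_mul m)).div_const (l - m)) (by fun_prop) (by
        intro t
        rw [← hl]
        simp only [hrec]
        field_simp
        linear_combination (-g t) * (1 - hlm))
    obtain ⟨um, hum, hsm⟩ := flq_fourier_twist ω hω
      (fun t => (l * g t - g (t + 2 * Real.pi / ω)) / (l - m)) _ (-Ω)
      (fun t => (((hd t).const_mul l).sub (hsh t)).div_const (l - m)) (by fun_prop) (by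
        intro t
        rw [← hm]
        simp only [hrec]
        field_simp
        linear_combination (g t) * (1 - hlm))
    refine ⟨um, up, hum, hup, fun t => ?_⟩
    have e : -Complex.I * (Ω : ℂ) * (t : ℂ) = Complex.I * ((-Ω : ℝ) : ℂ) * (t : ℂ) := by
      push_cast; ring
    rw [e, ← hsp t, ← hsm t]
    field_simp
    ring

def FlqSol (ε : ℝ) (f : ℝ → ℝ) (x y : ℝ → ℂ) : Prop :=
  ∀ t, HasDerivAt x (-Complex.I * (ε * y t + f t * x t)) t ∧
    HasDerivAt y (-Complex.I * (ε * x t - f t * y t)) t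

theorem FlqSol.norm_const {ε : ℝ} {f : ℝ → ℝ} {x y : ℝ → ℂ} (h : FlqSol ε f x y) (t : ℝ) :
    x t * (starRingEnd ℂ) (x t) + y t * (starRingEnd ℂ) (y t)
      = x 0 * (starRingEnd ℂ) (x 0) + y 0 * (starRingEnd ℂ) (y 0) := by
  have hd : ∀ t, HasDerivAt
      (fun t => x t * (starRingEnd ℂ) (x t) + y t * (starRingEnd ℂ) (y t)) 0 t := by
    intro t
    obtain ⟨h1, h2⟩ := h t
    convert! (h1.mul h1.star).add (h2.mul h2.star) using 1
    simp
    ring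
  exact is_const_of_deriv_eq_zero (fun t => (hd t).differentiableAt) (fun t => (hd t).deriv) t 0

theorem FlqSol.zero {ε : ℝ} {f : ℝ → ℝ} {x y : ℝ → ℂ} (h : FlqSol ε f x y)
    (hx : x 0 = 0) (hy : y 0 = 0) (t : ℝ) : x t = 0 ∧ y t = 0 := by
  have := h.norm_const t
  rw [hx, hy] at this
  simp only [Complex.mul_conj, map_zero, mul_zero, add_zero] at this
  norm_cast at this
  have h1 := Complex.normSq_nonneg (x t)
  have h2 := Complex.normSq_nonneg (y t)
  exact ⟨Complex.normSq_eq_zero.1 (by linarith), Complex.normSq_eq_zero.1 (by linarith)⟩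

theorem FlqSol.floquet {ε : ℝ} {f : ℝ → ℝ} {a c b d : ℝ → ℂ} (h : FlqSol ε f a c)
    (k : FlqSol ε f b d) (ha : a 0 = 1) (hc : c 0 = 0) (hb : b 0 = 0) (hd : d 0 = 1)
    {x y : ℝ → ℂ} (hxy : FlqSol ε f x y) (T : ℝ) (hf : ∀ t, f (t + T) = f t) (t : ℝ) :
    x (t + T) = x T * a t + y T * b t := by
  have hs : FlqSol ε f (fun t => x (t + T) - (x T * a t + y T * b t))
      (fun t => y (t + T) - (x T * c t + y T * d t)) := by
    intro t
    obtain ⟨p1, p2⟩ := hxy (t + T)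
    rw [hf] at p1 p2
    constructor
    · convert! (p1.comp_add_const t T).sub
        (((h t).1.const_mul (x T)).add ((k t).1.const_mul (y T))) using 1
      ring
    · convert! (p2.comp_add_const t T).sub
        (((h t).2.const_mul (x T)).add ((k t).2.const_mul (y T))) using 1
      ring
  have := (hs.zero (by simp [ha, hb]) (by simp [hc, hd]) t).1
  exact sub_eq_zero.1 this

theorem floquet_form_conditions_I_II
    (ω : ℝ) (hω : 0 < ω)
    (F : ℤ → ℂ) (hFfin : {n : ℤ | F n ≠ 0}.Finite)
    (f : ℝ → ℝ)
    (hf : ∀ t : ℝ, (f t : ℂ) = ∑ᶠ n : ℤ, F n * Complex.exp (Complex.I * (n : ℂ) * (ω : ℂ) * (t : ℂ)))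
    (Q₀ Q₁ : ℝ → ℂ)
    (hQ₀ : ∀ t : ℝ, Q₀ t = Complex.exp (2 * Complex.I * ∫ τ in (0:ℝ)..t, (f τ : ℂ)))
    (M₀ Mc : ℂ)
    (hM₀ : MeanValueIs Q₀ M₀)
    (hMc : MeanValueIs (fun t => (starRingEnd ℂ) (Q₀ t)) Mc)
    (hQ₁ : ∀ t : ℝ, Q₁ t = Q₀ t * ∫ τ in (0:ℝ)..t, ((starRingEnd ℂ) (Q₀ τ) - Mc))
    (hcond : M₀ ≠ 0 ∨ (M₀ = 0 ∧ ∃ M₁ : ℂ, MeanValueIs Q₁ M₁ ∧ M₁ ≠ 0)) :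
    ∃ K : ℝ, 0 < K ∧ ∀ ε : ℝ, |ε| < K →
      ∀ U : ℝ → Matrix (Fin 2) (Fin 2) ℂ,
        U 0 = 1 →
        (∀ t : ℝ, ∀ i j : Fin 2, HasDerivAt (fun s => U s i j)
          (((-Complex.I) • (((ε : ℂ) • (!![0, 1; 1, 0] : Matrix (Fin 2) (Fin 2) ℂ)
            + (f t : ℂ) • (!![1, 0; 0, -1] : Matrix (Fin 2) (Fin 2) ℂ)) * U t)) i j) t) →
        ∃ Ω : ℝ, ∃ u11m u11p u12m u12p : ℤ → ℂ,
          Summable (fun n : ℤ => ‖u11m n‖) ∧ Summable (fun n : ℤ => ‖u11p n‖) ∧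
          Summable (fun n : ℤ => ‖u12m n‖) ∧ Summable (fun n : ℤ => ‖u12p n‖) ∧
          ∀ t : ℝ,
            U t 0 0 =
              Complex.exp (-Complex.I * (Ω : ℂ) * (t : ℂ)) *
                (∑' n : ℤ, u11m n * Complex.exp (Complex.I * (n : ℂ) * (ω : ℂ) * (t : ℂ)))
              + Complex.exp (Complex.I * (Ω : ℂ) * (t : ℂ)) *
                (∑' n : ℤ, u11p n * Complex.exp (Complex.I * (n : ℂ) * (ω : ℂ) * (t : ℂ))) ∧
            U t 0 1 =
              Complex.exp (-Complex.I * (Ω : ℂ) * (t : ℂ)) *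
                (∑' n : ℤ, u12m n * Complex.exp (Complex.I * (n : ℂ) * (ω : ℂ) * (t : ℂ)))
              + Complex.exp (Complex.I * (Ω : ℂ) * (t : ℂ)) *
                (∑' n : ℤ, u12p n * Complex.exp (Complex.I * (n : ℂ) * (ω : ℂ) * (t : ℂ))) ∧
            U t 1 0 = -(starRingEnd ℂ) (U t 0 1) ∧
            U t 1 1 = (starRingEnd ℂ) (U t 0 0) := by
  refine ⟨1, one_pos, fun ε _ U hU0 hU => ?_⟩
  set T : ℝ := 2 * Real.pi / ω with hTdef
  have hT : 0 < T := by positivity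
  have hfsum : ∀ t : ℝ, (f t : ℂ) = ∑ n ∈ hFfin.toFinset,
      F n * Complex.exp (Complex.I * (n : ℂ) * (ω : ℂ) * (t : ℂ)) := by
    intro t
    rw [hf t]
    refine finsum_eq_sum_of_support_subset _ ?_
    intro n hn
    simp only [Function.mem_support] at hn
    simpa using left_ne_zero_of_mul hn
  have hfcont : Continuous (fun t => (f t : ℂ)) := by
    simp_rw [hfsum]
    fun_prop
  have hfper : ∀ t, f (t + T) = f t := by
    intro t
    have : (f (t + T) : ℂ) = f t := by
      rw [hfsum, hfsum]
      refine Finset.sum_congr rfl fun n _ => ?_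
      congr 1
      rw [Complex.exp_eq_exp_iff_exists_int]
      refine ⟨n, ?_⟩
      have : (ω:ℂ) ≠ 0 := by exact_mod_cast hω.ne'
      rw [hTdef]
      push_cast
      field_simp
    exact_mod_cast this
  have s1 : FlqSol ε f (fun t => U t 0 0) (fun t => U t 1 0) := by
    intro t
    constructor
    · convert! hU t 0 0 using 1
      simp [Matrix.vecMul, dotProduct, Fin.sum_univ_two]
      ring
    · convert! hU t 1 0 using 1
      simp [Matrix.vecMul, dotProduct, Fin.sum_univ_two]
      ring
  have s2 : FlqSol ε f (fun t => U t 0 1) (fun t => U t 1 1) := by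
    intro t
    constructor
    · convert! hU t 0 1 using 1
      simp [Matrix.vecMul, dotProduct, Fin.sum_univ_two]
      ring
    · convert! hU t 1 1 using 1
      simp [Matrix.vecMul, dotProduct, Fin.sum_univ_two]
      ring
  have i00 : U 0 0 0 = 1 := by simp [hU0]
  have i01 : U 0 0 1 = 0 := by simp [hU0]
  have i10 : U 0 1 0 = 0 := by simp [hU0]
  have i11 : U 0 1 1 = 1 := by simp [hU0]
  have c00 : Continuous (fun t => U t 0 0) :=
    continuous_iff_continuousAt.2 fun t => (hU t 0 0).continuousAt
  have c01 : Continuous (fun t => U t 0 1) :=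
    continuous_iff_continuousAt.2 fun t => (hU t 0 1).continuousAt
  have c10 : Continuous (fun t => U t 1 0) :=
    continuous_iff_continuousAt.2 fun t => (hU t 1 0).continuousAt
  have c11 : Continuous (fun t => U t 1 1) :=
    continuous_iff_continuousAt.2 fun t => (hU t 1 1).continuousAt
  have s3 : FlqSol ε f (fun t => U t 0 1 + (starRingEnd ℂ) (U t 1 0))
      (fun t => U t 1 1 - (starRingEnd ℂ) (U t 0 0)) := by
    intro t
    constructor
    · convert! (s2 t).1.add (s1 t).2.star using 1
      simp
      ring
    · convert! (s2 t).2.sub (s1 t).1.star using 1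
      simp
      ring
  have hz := fun t => s3.zero (by simp [i01, i10]) (by simp [i11, i00]) t
  have h11 : ∀ t, U t 1 1 = (starRingEnd ℂ) (U t 0 0) := fun t => sub_eq_zero.1 (hz t).2
  have h10 : ∀ t, U t 1 0 = -(starRingEnd ℂ) (U t 0 1) := by
    intro t
    have := congrArg (starRingEnd ℂ) (hz t).1
    simp at this
    linear_combination this
  have hN : U T 0 0 * (starRingEnd ℂ) (U T 0 0) + U T 0 1 * (starRingEnd ℂ) (U T 0 1) = 1 := by
    have := s1.norm_const T
    simp only [i00, i10, h10 T] at this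
    simp at this
    linear_combination this
  have r1 : ∀ t, U (t + T) 0 0 = U T 0 0 * U t 0 0 + U T 1 0 * U t 0 1 :=
    s1.floquet s2 i00 i10 i01 i11 s1 T hfper
  have r2 : ∀ t, U (t + T) 0 1 = U T 0 1 * U t 0 0 + U T 1 1 * U t 0 1 :=
    s1.floquet s2 i00 i10 i01 i11 s2 T hfper
  have h10T := h10 T
  have h11T := h11 T
  generalize hA : U T 0 0 = A at *
  generalize hB : U T 0 1 = B at *
  rw [h10T] at r1
  rw [h11T] at r2
  have hNr : A.re ^ 2 + A.im ^ 2 + (B.re ^ 2 + B.im ^ 2) = 1 := by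
    rw [Complex.mul_conj, Complex.mul_conj, Complex.normSq_apply, Complex.normSq_apply] at hN
    norm_cast at hN
    linarith
  set θ := Real.arccos A.re with hθ
  have hcos : Real.cos θ = A.re :=
    Real.cos_arccos (by nlinarith [sq_nonneg A.im, sq_nonneg B.re, sq_nonneg B.im])
      (by nlinarith [sq_nonneg A.im, sq_nonneg B.re, sq_nonneg B.im])
  have hTc : (T : ℂ) ≠ 0 := by exact_mod_cast hT.ne'
  obtain ⟨l, hl⟩ : ∃ l, l = Complex.exp (Complex.I * ((θ / T : ℝ) : ℂ) * (T : ℂ)) := ⟨_, rfl⟩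
  obtain ⟨m, hm⟩ : ∃ m, m = Complex.exp (Complex.I * ((-(θ / T) : ℝ) : ℂ) * (T : ℂ)) := ⟨_, rfl⟩
  have hl' : l = Real.cos θ + Real.sin θ * Complex.I := by
    rw [hl, Complex.ofReal_cos, Complex.ofReal_sin, ← Complex.exp_mul_I]
    congr 1
    push_cast
    field_simp
  have hm' : m = Real.cos θ - Real.sin θ * Complex.I := by
    have : m = Real.cos (-θ) + Real.sin (-θ) * Complex.I := by
      rw [hm, Complex.ofReal_cos, Complex.ofReal_sin, ← Complex.exp_mul_I]
      congr 1
      push_cast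
      field_simp
    rw [this]
    simp
    ring
  have htr : l + m = A + (starRingEnd ℂ) A := by
    rw [hl', hm', hcos, Complex.add_conj]
    push_cast
    ring
  have hdeg : l = m → B = 0 ∧ l = A ∧ l = (starRingEnd ℂ) A := by
    intro hlm
    have hs : Real.sin θ = 0 := by
      have : (Real.sin θ : ℂ) * (2 * Complex.I) = 0 := by
        linear_combination hlm - hl' + hm'
      have h2 : (Real.sin θ : ℂ) = 0 := by
        rcases mul_eq_zero.1 this with h | h
        · exact h
        · simp at h
      exact_mod_cast h2
    have h1 := Real.sin_sq_add_cos_sq θ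
    rw [hs, hcos] at h1
    have hAi : A.im = 0 := by nlinarith [sq_nonneg A.im, sq_nonneg B.re, sq_nonneg B.im]
    have hBr : B.re = 0 := by nlinarith [sq_nonneg A.im, sq_nonneg B.re, sq_nonneg B.im]
    have hBi : B.im = 0 := by nlinarith [sq_nonneg A.im, sq_nonneg B.re, sq_nonneg B.im]
    refine ⟨Complex.ext hBr hBi, ?_, ?_⟩
    · rw [hl', hs, hcos]
      apply Complex.ext <;> simp [hAi]
    · rw [hl', hs, hcos]
      apply Complex.ext <;> simp [hAi]
  obtain ⟨u11m, u11p, hs1, hs2, he1⟩ := flq_decomp ω hω (fun t => U t 0 0) _ (θ / T)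
    (fun t => (s1 t).1) (by fun_prop) l hl m hm
    (by
      intro t
      simp only [← hTdef]
      rw [r1 (t + T), r2 t, r1 t, htr]
      linear_combination (-U t 0 0) * hN)
    (by
      intro h t
      obtain ⟨p, q, _⟩ := hdeg h
      simp only [← hTdef]
      rw [r1, q, p]
      simp)
  obtain ⟨u12m, u12p, hs3, hs4, he2⟩ := flq_decomp ω hω (fun t => U t 0 1) _ (θ / T)
    (fun t => (s2 t).1) (by fun_prop) l hl m hm
    (by
      intro t
      simp only [← hTdef]
      rw [r2 (t + T), r2 t, r1 t, htr]
      linear_combination (-U t 0 1) * hN)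
    (by
      intro h t
      obtain ⟨p, _, q⟩ := hdeg h
      simp only [← hTdef]
      rw [r2, q, p]
      simp)
  exact ⟨θ / T, u11m, u11p, u12m, u12p, hs1, hs2, hs3, hs4,
    fun t => ⟨he1 t, he2 t, h10 t, h11 t⟩⟩
end
end

section
/- Define the Bessel function of the first kind J : ℝ → ℝ → ℝ by the power series J(ν, x) = Σ_{k=0}^{∞} (−1)^k / (k! · Γ(k+ν+1)) · (x/2)^{2k+ν} for x > 0 (with the convention 1/Γ(z) = 0 when Γ(z) = 0, i.e., at nonpositive integer arguments of Γ). Then for every integer m ≥ 0 and every real x > 0: Σ_{k∈ℤ, k≠0} J(m+k, x)² / k = −J(m, x) · [ D₁(m, x) + (−1)^m · D₂(m, x) ], where D₁(m, x) is the derivative of ν ↦ J(ν, x) at ν = m, and D₂(m, x) is the derivative of ν ↦ J(−ν, x) at ν = m. Equivalently, Σ_{k≠0} J(m+k,x)²/k = J(m,x)·( −2·D₁(m,x) + π·Y_m(x) ), where π·Y_m(x) = D₁(m,x) − (−1)^m·D₂(m,x) defines the Bessel function of the second kind of integer order m. -/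
noncomputable section

/-- The Bessel function of the first kind of (real) order `ν`, defined for `x > 0` by the
power series `J(ν, x) = Σ_{k≥0} (−1)^k / (k!·Γ(k+ν+1)) · (x/2)^{2k+ν}`, where `(x/2)^{2k+ν}`
is the real power and `1/Γ` vanishes at the nonpositive-integer poles of `Γ`
(Mathlib's `Real.Gamma` is `0` there, and division by `0` is `0`). -/
def besselJ (ν x : ℝ) : ℝ :=
  ∑' k : ℕ, (-1 : ℝ) ^ k / ((Nat.factorial k : ℝ) * Real.Gamma ((k : ℝ) + ν + 1)) *
    (x / 2) ^ (2 * (k : ℝ) + ν)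

open Finset Complex in
lemma rgamma_desc (z : ℂ) (n : ℕ) :
    (Complex.Gamma (z + 1 - n))⁻¹ = (∏ l ∈ range n, (z - l)) * (Complex.Gamma (z + 1))⁻¹ := by
  induction n with
  | zero => simp
  | succ n ih =>
    have h := Complex.one_div_Gamma_eq_self_mul_one_div_Gamma_add_one (z - n)
    rw [prod_range_succ]
    have e1 : z + 1 - ((n + 1 : ℕ) : ℂ) = z - n := by push_cast; ring
    have e2 : z - n + 1 = z + 1 - n := by ring
    rw [e2, ih] at h
    rw [e1, h]; ring

open Finset in
lemma vander (r s : ℂ) (k : ℕ) :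
    ∏ l ∈ range k, (r + s - l) = ∑ ij ∈ antidiagonal k, (k.choose ij.1 : ℂ) *
      ((∏ l ∈ range ij.1, (r - l)) * ∏ l ∈ range ij.2, (s - l)) := by
  have h := Ring.descPochhammer_smeval_add (r := r) (s := s) k (Commute.all _ _)
  have e : ∀ (n : ℕ) (z : ℂ), (descPochhammer ℤ n).smeval z = ∏ l ∈ range n, (z - l) := by
    intro n z
    induction n with
    | zero => simp
    | succ n ih =>
      rw [descPochhammer_succ_right, Polynomial.smeval_mul, ih, prod_range_succ,
        Polynomial.smeval_sub, Polynomial.smeval_X, Polynomial.smeval_natCast]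
      simp
  simp only [e] at h
  rw [h]

open Finset in
lemma prodform (μ : ℂ) (k : ℕ) :
    ∑ ij ∈ antidiagonal k, (((ij.1.factorial : ℂ))⁻¹ * (Complex.Gamma (ij.1 + μ + 1))⁻¹) *
      (((ij.2.factorial : ℂ))⁻¹ * (Complex.Gamma (ij.2 + -μ + 1))⁻¹) =
     ((k.factorial : ℂ)^2)⁻¹ * ((2*k).factorial * (Complex.Gamma (k + 1 + μ))⁻¹ * (Complex.Gamma (k + 1 - μ))⁻¹) := by
  have h := vander (k - μ) (k + μ) k
  have h2 : ∏ l ∈ range k, ((k:ℂ) - μ + (k + μ) - l) = (2 * k).factorial * ((k.factorial : ℂ))⁻¹ := by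
    rw [eq_mul_inv_iff_mul_eq₀ (by exact_mod_cast k.factorial_ne_zero)]
    have := Nat.descFactorial_eq_prod_range (2*k) k
    have h3 := Nat.factorial_mul_descFactorial (n := 2*k) (k := k) (by omega)
    rw [this, show 2*k-k = k by omega] at h3
    rw [← h3]
    push_cast
    rw [mul_comm]
    congr 1
    refine prod_congr rfl fun l hl => ?_
    rw [Nat.cast_sub (by have := mem_range.1 hl; omega)]
    push_cast; ring
  have : (k.factorial : ℂ) ≠ 0 := by exact_mod_cast k.factorial_ne_zero
  have h4 : ((k.factorial : ℂ)^2)⁻¹ * ((2*k).factorial * (Complex.Gamma (k + 1 + μ))⁻¹ * (Complex.Gamma (k + 1 - μ))⁻¹)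
     = (k.factorial : ℂ)⁻¹ * ((2 * k).factorial * ((k.factorial : ℂ))⁻¹) * (Complex.Gamma (k + 1 + μ))⁻¹ * (Complex.Gamma (k + 1 - μ))⁻¹ := by
    rw [sq, mul_inv]; ring
  rw [h4, ← h2, h, mul_sum, sum_mul, sum_mul]
  refine sum_congr rfl fun ij hij => ?_
  obtain ⟨i, j⟩ := ij
  simp only [HasAntidiagonal.mem_antidiagonal] at hij
  subst hij
  have r1 := rgamma_desc ((i + j : ℕ) + μ) j
  have r2 := rgamma_desc ((i + j : ℕ) - μ) i
  rw [show ((i + j : ℕ):ℂ) + μ + 1 - j = i + μ + 1 by push_cast; ring, show ((i + j : ℕ):ℂ) + μ + 1 = ((i + j : ℕ):ℂ) + 1 + μ by ring] at r1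
  rw [show ((i + j : ℕ):ℂ) - μ + 1 - i = j + -μ + 1 by push_cast; ring, show ((i + j : ℕ):ℂ) - μ + 1 = ((i + j : ℕ):ℂ) + 1 - μ by ring] at r2
  simp only
  rw [r1, r2, ← Nat.add_choose_mul_factorial_mul_factorial i j]
  have a1 : (i.factorial : ℂ) ≠ 0 := by exact_mod_cast i.factorial_ne_zero
  have a2 : (j.factorial : ℂ) ≠ 0 := by exact_mod_cast j.factorial_ne_zero
  have a3 : ((i + j).choose i : ℂ) ≠ 0 := by exact_mod_cast (Nat.choose_pos (by omega)).ne'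
  rw [Nat.choose_symm_add] at a3 ⊢
  push_cast
  field_simp

/-- normalised reciprocal Gamma product -/
noncomputable def PP (k : ℕ) (μ : ℂ) : ℂ :=
  (2*k).factorial * (Complex.Gamma (k + 1 + μ))⁻¹ * (Complex.Gamma (k + 1 - μ))⁻¹

/-- centered binomial coefficient -/
def bb (k : ℕ) (n : ℤ) : ℕ := if -(k:ℤ) ≤ n then (2*k).choose (k+n).toNat else 0

lemma bb_zero (k : ℕ) (n : ℤ) (h : n ∉ Finset.Icc (-(k:ℤ)) k) : bb k n = 0 := by
  simp only [Finset.mem_Icc, not_and_or, not_le] at h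
  unfold bb
  split_ifs with h1
  · exact Nat.choose_eq_zero_of_lt (by omega)
  · rfl

lemma PP_int (k : ℕ) (n : ℤ) : PP k n = bb k n := by
  by_cases h : n ∈ Finset.Icc (-(k:ℤ)) k
  · simp only [Finset.mem_Icc] at h
    obtain ⟨j, hj⟩ : ∃ j : ℕ, (j : ℤ) = k + n := ⟨(k+n).toNat, by omega⟩
    obtain ⟨i, hi⟩ : ∃ i : ℕ, (i : ℤ) = k - n := ⟨(k-n).toNat, by omega⟩
    have hj' : (j : ℂ) = k + n := by exact_mod_cast congrArg (Int.cast : ℤ → ℂ) hj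
    have hi' : (i : ℂ) = k - n := by exact_mod_cast congrArg (Int.cast : ℤ → ℂ) hi
    have hk : 2 * k = j + i := by omega
    have hb : bb k n = (j+i).choose j := by
      unfold bb
      rw [if_pos h.1, hk]
      congr 1; omega
    unfold PP
    rw [hb, show (k:ℂ) + 1 + n = j + 1 by rw [hj']; ring, show (k:ℂ) + 1 - n = i + 1 by rw [hi']; ring,
      Complex.Gamma_nat_eq_factorial, Complex.Gamma_nat_eq_factorial, hk,
      ← Nat.add_choose_mul_factorial_mul_factorial j i]
    have a1 : (i.factorial : ℂ) ≠ 0 := by exact_mod_cast i.factorial_ne_zero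
    have a2 : (j.factorial : ℂ) ≠ 0 := by exact_mod_cast j.factorial_ne_zero
    rw [← Nat.choose_symm_add]
    push_cast
    field_simp
  · rw [bb_zero k n h]
    simp only [Finset.mem_Icc, not_and_or, not_le] at h
    unfold PP
    rcases h with h | h
    · obtain ⟨j, hj⟩ : ∃ j : ℕ, (j : ℤ) = -(k + 1 + n) := ⟨(-(k+1+n)).toNat, by omega⟩
      have hj' : (j : ℂ) = -(k + 1 + n) := by exact_mod_cast congrArg (Int.cast : ℤ → ℂ) hj
      rw [show (k:ℂ) + 1 + n = -j by rw [hj']; ring, Complex.Gamma_neg_nat_eq_zero]; simp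
    · obtain ⟨j, hj⟩ : ∃ j : ℕ, (j : ℤ) = -(k + 1 - n) := ⟨(-(k+1-n)).toNat, by omega⟩
      have hj' : (j : ℂ) = -(k + 1 - n) := by exact_mod_cast congrArg (Int.cast : ℤ → ℂ) hj
      rw [show (k:ℂ) + 1 - n = -j by rw [hj']; ring, Complex.Gamma_neg_nat_eq_zero]; simp

open Finset in
lemma sum_bb (k : ℕ) (f : ℤ → ℂ) : ∑ n ∈ Icc (-(k:ℤ)) k, (bb k n : ℂ) * f n
    = ∑ j ∈ range (2*k+1), ((2*k).choose j : ℂ) * f ((j:ℤ) - k) := by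
  symm
  refine sum_bij (fun j _ => (j:ℤ) - k) ?_ ?_ ?_ ?_
  · intro a ha; simp at ha ⊢; omega
  · intro a _ b _ h; simp at h; exact h
  · intro n hn; simp at hn; exact ⟨(n+k).toNat, by simp; omega, by omega⟩
  · intro a ha
    unfold bb
    rw [if_pos (by omega)]
    congr 4; omega

open Finset in
lemma pfrac (N : ℕ) : ∀ z : ℂ, (∀ j : ℕ, z + j ≠ 0) →
    ∑ j ∈ range (N+1), (N.choose j : ℂ) * ((-1)^j / (z + j)) = N.factorial / ∏ j ∈ range (N+1), (z + j) := by
  induction N with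
  | zero => intro z hz; simp
  | succ N ih =>
    intro z hz
    have hz1 : ∀ j : ℕ, (z + 1) + j ≠ 0 := by
      intro j; have := hz (j+1); push_cast at this; rwa [add_assoc, add_comm (1:ℂ)]
    have e : ∑ j ∈ range (N+1+1), ((N+1).choose j : ℂ) * ((-1)^j / (z + j))
       = ∑ j ∈ range (N+1), (N.choose j : ℂ) * ((-1)^j / (z + j)) -
         ∑ j ∈ range (N+1), (N.choose j : ℂ) * ((-1)^j / (z + 1 + j)) := by
      have e1 : ∑ j ∈ range (N+1), (N.choose j : ℂ) * ((-1)^j / (z + j)) =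
          ∑ j ∈ range (N+1+1), (N.choose j : ℂ) * ((-1)^j / (z + j)) := by
        rw [sum_range_succ _ (N+1)]; simp
      rw [e1, sum_range_succ' _ (N+1), sum_range_succ' _ (N+1), add_sub_right_comm, ← sum_sub_distrib]
      congr 1
      · refine sum_congr rfl fun j _ => ?_
        rw [Nat.choose_succ_succ]
        rw [show z + 1 + (j:ℂ) = z + ((j+1 : ℕ):ℂ) by push_cast; ring]
        push_cast
        ring
      · simp
    rw [e, ih z hz, ih (z+1) hz1]
    have hp : ∏ j ∈ range (N+1), (z + j) = (∏ j ∈ range N, (z + 1 + j)) * z := by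
      rw [prod_range_succ']
      simp only [Nat.cast_zero, add_zero]
      congr 1
      refine prod_congr rfl fun j _ => by push_cast; ring
    have hp2 : ∏ j ∈ range (N+1), (z + 1 + j) = (∏ j ∈ range N, (z + 1 + j)) * (z + 1 + N) := prod_range_succ _ _
    have hp3 : ∏ j ∈ range (N+1+1), (z + j) = (∏ j ∈ range N, (z + 1 + j)) * z * (z + 1 + N) := by
      rw [prod_range_succ, hp]; push_cast; ring
    rw [hp, hp2, hp3, Nat.factorial_succ]
    have q1 : ∏ j ∈ range N, (z + 1 + j) ≠ 0 := prod_ne_zero_iff.2 fun j _ => hz1 j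
    have q2 : z ≠ 0 := by simpa using hz 0
    have q3 := hz1 N
    push_cast
    field_simp
    ring

open Finset in
lemma PP_nonint (k : ℕ) (μ : ℂ) (hμ : ∀ n : ℤ, μ ≠ n) :
    PP k μ = Complex.sin (Real.pi * μ) / Real.pi *
      ∑ n ∈ Icc (-(k:ℤ)) k, (bb k n : ℂ) * ((-1)^n / (μ - n)) := by
  rw [sum_bb]
  have hz : ∀ j : ℕ, (-μ-k) + (j:ℂ) ≠ 0 := by
    intro j h
    refine hμ (j - k) ?_
    push_cast
    linear_combination -h
  have h1 := pfrac (2*k) (-μ-k) hz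
  have h2 : ∑ j ∈ range (2*k+1), ((2*k).choose j : ℂ) * ((-1)^((j:ℤ)-k) / (μ - ((j:ℤ)-k : ℤ)))
     = -(-1)^k * ∑ j ∈ range (2*k+1), ((2*k).choose j : ℂ) * ((-1)^j / ((-μ-k) + j)) := by
    rw [mul_sum]
    refine sum_congr rfl fun j _ => ?_
    have : μ - (((j:ℤ)-k : ℤ) : ℂ) = -((-μ-k) + j) := by push_cast; ring
    rw [this, zpow_sub₀ (by norm_num), zpow_natCast, zpow_natCast, div_neg]
    have : ((-1:ℂ)^k)⁻¹ = (-1)^k := by rw [← inv_pow]; norm_num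
    rw [div_eq_mul_inv _ ((-1:ℂ)^k), this]
    ring
  rw [h2, h1]
  have h3 := rgamma_desc (k - μ) (2*k+1)
  have h4 : ∏ l ∈ range (2*k+1), ((k:ℂ) - μ - l) = ∏ j ∈ range (2*k+1), (-μ-k + (j:ℂ)) := by
    rw [← prod_range_reflect]
    refine prod_congr rfl fun j hj => ?_
    have := mem_range.1 hj
    rw [show 2*k+1-1-j = 2*k-j by omega, Nat.cast_sub (by omega)]
    push_cast; ring
  rw [h4] at h3
  have h5 := Complex.Gamma_mul_Gamma_one_sub (-μ-k)
  have h6 : Complex.sin (Real.pi * (-μ-k)) = -(-1)^k * Complex.sin (Real.pi * μ) := by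
    have := Complex.sin_antiperiodic.add_nat_mul_eq k (x := Real.pi * μ)
    rw [show (Real.pi:ℂ) * (-μ-k) = -(Real.pi * μ + k * Real.pi) by ring, Complex.sin_neg, this]
    ring
  have hq : ∏ j ∈ range (2*k+1), (-μ-k + (j:ℂ)) ≠ 0 := prod_ne_zero_iff.2 fun j _ => hz j
  set Q := ∏ j ∈ range (2*k+1), (-μ-k + (j:ℂ))
  rw [show (k:ℂ) - μ + 1 - ((2*k+1:ℕ):ℂ) = -μ-k by push_cast; ring, show (k:ℂ) - μ + 1 = k + 1 - μ by ring] at h3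
  have h7 : (Complex.Gamma (k + 1 - μ))⁻¹ = (Complex.Gamma (-μ-k))⁻¹ / Q := by
    rw [h3]; field_simp
  have h8 : (Complex.Gamma (-μ-k))⁻¹ * (Complex.Gamma (k + 1 + μ))⁻¹ = Complex.sin (Real.pi * (-μ-k)) / Real.pi := by
    rw [← mul_inv, show (k:ℂ)+1+μ = 1 - (-μ-k) by ring, h5, inv_div]
  unfold PP
  rw [h7]
  calc _ = (2*k).factorial / Q * ((Complex.Gamma (-μ-k))⁻¹ * (Complex.Gamma (k + 1 + μ))⁻¹) := by ring
    _ = _ := by rw [h8, h6]; ring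

open Finset Topology in
lemma PP_deriv (k : ℕ) (m : ℤ) :
    HasDerivAt (PP k) ((-1)^m * ∑ n ∈ (Icc (-(k:ℤ)) k).erase m, (bb k n : ℂ) * ((-1)^n / (m - n))) m := by
  set ψ : ℂ → ℂ := fun t => dslope Complex.sin 0 (Real.pi * t)
  have hψ0 : ψ 0 = 1 := by simp [ψ, dslope_same]
  have hψd : Differentiable ℂ ψ := by
    have : Differentiable ℂ (dslope Complex.sin 0) := by
      rw [← differentiableOn_univ, Complex.differentiableOn_dslope Filter.univ_mem]
      exact Complex.differentiable_sin.differentiableOn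
    exact this.comp (differentiable_id.const_mul _)
  have hψe : ∀ t, ψ (-t) = ψ t := by
    intro t
    by_cases h : t = 0
    · simp [h]
    · have h1 : (Real.pi:ℂ) * t ≠ 0 := mul_ne_zero (by exact_mod_cast Real.pi_ne_zero) h
      have h2 : (Real.pi:ℂ) * -t ≠ 0 := by simpa using h1
      simp only [ψ]
      rw [dslope_of_ne _ h1, dslope_of_ne _ h2]
      simp [slope_def_field, div_neg, neg_div]
  have hψ' : HasDerivAt ψ 0 0 := by
    have h1 := (hψd 0).hasDerivAt
    have h2 : HasDerivAt ψ (-deriv ψ 0) 0 := by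
      have h3 : HasDerivAt ψ (deriv ψ 0) (-0) := by simpa using h1
      have h4 := h3.comp (0:ℂ) (hasDerivAt_neg (0:ℂ))
      have h5 : ψ ∘ Neg.neg = ψ := funext hψe
      have h6 : ψ ∘ (fun x => -x) = ψ := funext hψe
      simpa [h5, h6] using h4
    have h3 := h1.unique h2
    have h4 : deriv ψ 0 = 0 := by linear_combination h3 / 2
    rwa [h4] at h1
  have hψs : ∀ t, Complex.sin (Real.pi * t) = Real.pi * t * ψ t := by
    intro t
    have := sub_smul_dslope Complex.sin 0 (Real.pi * t)
    simp at this
    simp only [ψ]; rw [this]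
  set A : ℂ → ℂ := fun μ => ∑ n ∈ (Icc (-(k:ℤ)) k).erase m, (bb k n : ℂ) * ((-1)^n / (μ - n))
  have hone : ((-1:ℂ)^m) * (-1)^m = 1 := by rw [← mul_zpow]; simp
  have hev : PP k =ᶠ[𝓝 (m:ℂ)] fun μ => (-1)^m * ψ (μ - m) * ((μ - m) * A μ + (-1)^m * bb k m) := by
    filter_upwards [Metric.ball_mem_nhds (m:ℂ) one_pos] with μ hμ
    by_cases h : μ = m
    · subst h
      simp only [sub_self, hψ0, zero_mul, zero_add, PP_int]
      rw [mul_one, ← mul_assoc, hone, one_mul]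
    · have hn : ∀ n : ℤ, μ ≠ n := by
        rintro n rfl
        rw [Metric.mem_ball, Complex.dist_eq] at hμ
        have h9 : ‖((n - m : ℤ) : ℂ)‖ < 1 := by push_cast; exact hμ
        rw [Complex.norm_intCast] at h9
        have h10 : |n - m| < 1 := by exact_mod_cast h9
        rw [Int.abs_lt_one_iff] at h10
        exact h (by rw [show n = m by omega])
      rw [PP_nonint k μ hn]
      have hs : ∑ n ∈ Icc (-(k:ℤ)) k, (bb k n : ℂ) * ((-1)^n / (μ - n)) =
          A μ + (bb k m : ℂ) * ((-1)^m / (μ - m)) := by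
        by_cases hm : m ∈ Icc (-(k:ℤ)) k
        · rw [← sum_erase_add _ _ hm]
        · simp only [A]
          rw [bb_zero k m hm, erase_eq_of_notMem hm]; simp
      have h6 : Complex.sin (Real.pi * μ) = (-1)^m * Complex.sin (Real.pi * (μ - m)) := by
        have := Complex.sin_antiperiodic.add_int_mul_eq m (x := Real.pi * (μ - m))
        rw [show (Real.pi:ℂ) * (μ - m) + m * Real.pi = Real.pi * μ by ring] at this
        rw [this, Int.cast_negOnePow]
      rw [hs, h6, hψs]
      have h7 : μ - m ≠ 0 := sub_ne_zero.2 h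
      have h8 : (Real.pi : ℂ) ≠ 0 := by exact_mod_cast Real.pi_ne_zero
      field_simp
  refine HasDerivAt.congr_of_eventuallyEq ?_ hev
  have hA : DifferentiableAt ℂ A m := by
    simp only [A]
    refine DifferentiableAt.fun_sum fun n hn => ?_
    have : (m:ℂ) - n ≠ 0 := by
      rw [sub_ne_zero]; exact_mod_cast (ne_of_mem_erase hn).symm
    fun_prop (disch := assumption)
  have hsub : HasDerivAt (fun μ : ℂ => μ - m) 1 m := (hasDerivAt_id _).sub_const _
  have hc : HasDerivAt (fun μ : ℂ => ψ (μ - m)) 0 m := by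
    have : HasDerivAt ψ 0 ((m:ℂ) - m) := by simpa using hψ'
    exact HasDerivAt.comp_sub_const (m:ℂ) (m:ℂ) this
  have := (hc.const_mul ((-1:ℂ)^m)).mul ((hsub.mul hA.hasDerivAt).add_const ((-1)^m * (bb k m : ℂ)))
  refine this.congr_deriv ?_
  simp [hψ0, A]

/-- complex Bessel terms -/
noncomputable def aa (y : ℝ) (k : ℕ) (ν : ℂ) : ℂ :=
  (-1)^k * (y:ℂ)^(2*k) * (y:ℂ)^ν * (((k.factorial : ℂ))⁻¹ * (Complex.Gamma (k + ν + 1))⁻¹)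

/-- complex Bessel function -/
noncomputable def Jc (y : ℝ) (ν : ℂ) : ℂ := ∑' k : ℕ, aa y k ν

lemma rgamma_bound (R : ℝ) : ∃ M : ℝ, ∀ (k : ℕ) (ν : ℂ), ‖ν‖ ≤ R →
    ‖(Complex.Gamma (k + ν + 1))⁻¹‖ ≤ M := by
  have h1 : ∀ k : ℕ, ∃ M : ℝ, ∀ ν ∈ Metric.closedBall (0:ℂ) R, ‖(Complex.Gamma (k + ν + 1))⁻¹‖ ≤ M := by
    intro k
    have hd : Continuous fun ν : ℂ => (Complex.Gamma (k + ν + 1))⁻¹ :=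
      Complex.differentiable_one_div_Gamma.continuous.comp
        (f := fun ν : ℂ => (k:ℂ) + ν + 1) (by fun_prop)
    exact (isCompact_closedBall (0:ℂ) R).exists_bound_of_continuousOn hd.continuousOn
  choose M hM using h1
  set K := ⌈R⌉₊
  refine ⟨∑ k ∈ Finset.range (K+1), |M k|, fun k => ?_⟩
  induction k with
  | zero =>
    intro ν hν
    refine (hM 0 ν (by simpa using hν)).trans ((le_abs_self _).trans ?_)
    exact Finset.single_le_sum (f := fun k => |M k|) (fun i _ => abs_nonneg _) (by simp)
  | succ k ih =>
    intro ν hν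
    by_cases hk : k + 1 < K + 1
    · refine (hM _ ν (by simpa using hν)).trans ((le_abs_self _).trans ?_)
      exact Finset.single_le_sum (f := fun k => |M k|) (fun i _ => abs_nonneg _) (by simpa using hk)
    · refine le_trans ?_ (ih ν hν)
      have h2 := Complex.one_div_Gamma_eq_self_mul_one_div_Gamma_add_one (k + ν + 1)
      rw [h2, norm_mul, show (((k+1:ℕ):ℂ) + ν + 1) = k + ν + 1 + 1 by push_cast; ring]
      refine le_mul_of_one_le_left (norm_nonneg _) ?_
      have h3 : R ≤ k := (Nat.le_ceil R).trans (by exact_mod_cast (by omega : K ≤ k))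
      have h4 : ‖((k+1 : ℕ) : ℂ)‖ ≤ ‖(k:ℂ) + ν + 1‖ + ‖ν‖ := by
        have := norm_sub_le ((k:ℂ) + ν + 1) ν
        rwa [show (k:ℂ) + ν + 1 - ν = ((k+1:ℕ):ℂ) by push_cast; ring] at this
      rw [Complex.norm_natCast] at h4
      push_cast at h4
      linarith

lemma aa_bound (y : ℝ) (hy : 0 < y) (R : ℝ) : ∃ u : ℕ → ℝ, Summable u ∧ ∀ (k : ℕ) (ν : ℂ), ‖ν‖ ≤ R →
    ‖aa y k ν‖ ≤ u k := by
  obtain ⟨M, hM⟩ := rgamma_bound R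
  have hy' : (y:ℂ) ≠ 0 := by exact_mod_cast hy.ne'
  obtain ⟨C, hC⟩ := (isCompact_closedBall (0:ℂ) R).exists_bound_of_continuousOn
    (f := fun ν : ℂ => (y:ℂ)^ν) (continuous_id.const_cpow (Or.inl hy')).continuousOn
  refine ⟨fun k => C * M * ((y^2)^k / k.factorial), (Real.summable_pow_div_factorial (y^2)).mul_left _, ?_⟩
  intro k ν hν
  have h1 := hM k ν hν
  have h2 := hC ν (by simpa using hν)
  have hC0 := (norm_nonneg _).trans h2
  unfold aa
  simp only [norm_mul, norm_pow, norm_neg, norm_one, one_pow, one_mul]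
  rw [norm_inv (k.factorial : ℂ), Complex.norm_natCast, Complex.norm_real, Real.norm_of_nonneg hy.le]
  calc y^(2*k) * ‖(y:ℂ)^ν‖ * ((k.factorial:ℝ)⁻¹ * ‖(Complex.Gamma (k + ν + 1))⁻¹‖)
      ≤ y^(2*k) * C * ((k.factorial:ℝ)⁻¹ * M) := by gcongr
    _ = _ := by rw [pow_mul]; ring

lemma aa_diff (y : ℝ) (hy : 0 < y) (k : ℕ) : Differentiable ℂ (aa y k) := by
  have hy' : (y:ℂ) ≠ 0 := by exact_mod_cast hy.ne'
  have h1 : Differentiable ℂ fun ν : ℂ => (Complex.Gamma (k + ν + 1))⁻¹ :=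
    Complex.differentiable_one_div_Gamma.comp (f := fun ν : ℂ => (k:ℂ) + ν + 1) (by fun_prop)
  have h2 : Differentiable ℂ fun ν : ℂ => (y:ℂ)^ν := fun ν => 
    (differentiableAt_id.const_cpow (Or.inl hy'))
  unfold aa
  exact (h2.const_mul _).mul (h1.const_mul _)

lemma aa_summable (y : ℝ) (hy : 0 < y) (ν : ℂ) : Summable fun k => ‖aa y k ν‖ := by
  obtain ⟨u, hu, h⟩ := aa_bound y hy ‖ν‖
  exact Summable.of_nonneg_of_le (fun _ => norm_nonneg _) (fun k => h k ν le_rfl) hu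

lemma Jc_diff (y : ℝ) (hy : 0 < y) : Differentiable ℂ (Jc y) := by
  intro ν
  obtain ⟨u, hu, h⟩ := aa_bound y hy (‖ν‖+1)
  have := Complex.differentiableOn_tsum_of_summable_norm (U := Metric.ball 0 (‖ν‖+1)) hu
    (fun k => (aa_diff y hy k).differentiableOn) Metric.isOpen_ball
    (fun k w hw => h k w (by simpa using (Metric.mem_ball.1 hw).le))
  exact this.differentiableAt (Metric.isOpen_ball.mem_nhds (by simp))

lemma Jc_ofReal (x : ℝ) (hx : 0 < x) (ν : ℝ) : Jc (x/2) ν = (besselJ ν x : ℂ) := by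
  unfold Jc besselJ
  rw [Complex.ofReal_tsum]
  refine tsum_congr fun k => ?_
  have hy : 0 < x/2 := by positivity
  unfold aa
  rw [Real.rpow_add hy, ← Complex.ofReal_cpow hy.le]
  rw [show (2 * (k:ℝ)) = ((2*k : ℕ) : ℝ) by push_cast; ring, Real.rpow_natCast]
  rw [show (k:ℂ) + ν + 1 = ((k + ν + 1 : ℝ) : ℂ) by push_cast; ring, Complex.Gamma_ofReal]
  push_cast
  ring

lemma Jc_neg_nat (y : ℝ) (hy : 0 < y) (n : ℕ) : Jc y (-(n:ℂ)) = (-1)^n * Jc y n := by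
  have hy' : (y:ℂ) ≠ 0 := by exact_mod_cast hy.ne'
  unfold Jc
  rw [← (aa_summable y hy (-(n:ℂ))).of_norm.sum_add_tsum_nat_add n, Finset.sum_eq_zero, zero_add, ← tsum_mul_left]
  · refine tsum_congr fun k => ?_
    unfold aa
    rw [show ((k+n : ℕ):ℂ) + -n + 1 = k + 1 by push_cast; ring,
      show (k:ℂ) + n + 1 = ((k+n:ℕ):ℂ) + 1 by push_cast; ring,
      Complex.Gamma_nat_eq_factorial, Complex.Gamma_nat_eq_factorial, Complex.cpow_neg, Complex.cpow_natCast,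
      show 2 * (k+n) = 2 * k + n + n by ring, pow_add _ _ n, pow_add _ _ n, pow_add _ _ n]
    field_simp
  · intro k hk
    have hk := Finset.mem_range.1 hk
    unfold aa
    rw [show (k:ℂ) + -n + 1 = -((n-k-1 : ℕ):ℂ) by
      rw [Nat.cast_sub (by omega), Nat.cast_sub (by omega)]; push_cast; ring,
      Complex.Gamma_neg_nat_eq_zero]
    simp

lemma Jc_neg_int (y : ℝ) (hy : 0 < y) (n : ℤ) : Jc y (-(n:ℂ)) = (-1)^n * Jc y n := by
  obtain ⟨k, rfl | rfl⟩ := n.eq_nat_or_neg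
  · simpa using Jc_neg_nat y hy k
  · have := Jc_neg_nat y hy k
    push_cast
    rw [this, neg_neg, ← mul_assoc, zpow_neg, zpow_natCast, inv_mul_cancel₀ (by simp), one_mul]

lemma conv_term (y : ℝ) (hy : 0 < y) (k : ℕ) (μ : ℂ) :
    ∑ ij ∈ Finset.HasAntidiagonal.antidiagonal k, aa y ij.1 μ * aa y ij.2 (-μ)
      = (-1)^k * (y:ℂ)^(2*k) * ((k.factorial : ℂ)^2)⁻¹ * PP k μ := by
  have hy' : (y:ℂ) ≠ 0 := by exact_mod_cast hy.ne'
  unfold PP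
  rw [mul_assoc _ ((k.factorial : ℂ)^2)⁻¹, ← prodform, Finset.mul_sum]
  refine Finset.sum_congr rfl fun ij hij => ?_
  obtain ⟨i, j⟩ := ij
  simp only [Finset.HasAntidiagonal.mem_antidiagonal] at hij
  subst hij
  unfold aa
  have : (y:ℂ)^μ * (y:ℂ)^(-μ) = 1 := by rw [← Complex.cpow_add _ _ hy']; simp
  simp only
  calc _ = ((y:ℂ)^μ * (y:ℂ)^(-μ)) * ((-1) ^ (i + j) * (y:ℂ) ^ (2 * (i + j)) *
     ((((i.factorial : ℂ))⁻¹ * (Complex.Gamma (i + μ + 1))⁻¹) *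
      (((j.factorial : ℂ))⁻¹ * (Complex.Gamma (j + -μ + 1))⁻¹))) := by ring
    _ = _ := by rw [this, one_mul]

/-- coefficient -/
noncomputable def cc (y : ℝ) (k : ℕ) : ℂ := (-1)^k * (y:ℂ)^(2*k) * ((k.factorial : ℂ)^2)⁻¹

lemma G_series (y : ℝ) (hy : 0 < y) (μ : ℂ) : Jc y μ * Jc y (-μ) = ∑' k, cc y k * PP k μ := by
  unfold Jc
  rw [tsum_mul_tsum_eq_tsum_sum_antidiagonal_of_summable_norm (aa_summable y hy μ) (aa_summable y hy (-μ))]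
  exact tsum_congr fun k => conv_term y hy k μ

lemma PP_diff (k : ℕ) : Differentiable ℂ (PP k) := by
  have h1 : Differentiable ℂ fun ν : ℂ => (Complex.Gamma (k + 1 + ν))⁻¹ :=
    Complex.differentiable_one_div_Gamma.comp (f := fun ν : ℂ => (k:ℂ) + 1 + ν) (by fun_prop)
  have h2 : Differentiable ℂ fun ν : ℂ => (Complex.Gamma (k + 1 - ν))⁻¹ :=
    Complex.differentiable_one_div_Gamma.comp (f := fun ν : ℂ => (k:ℂ) + 1 - ν) (by fun_prop)
  unfold PP
  exact (h1.const_mul _).mul h2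

lemma G_deriv (y : ℝ) (hy : 0 < y) (μ : ℂ) :
    HasDerivAt (fun μ => Jc y μ * Jc y (-μ)) (∑' k, cc y k * deriv (PP k) μ) μ := by
  have hd : Differentiable ℂ (fun μ => Jc y μ * Jc y (-μ)) :=
    (Jc_diff y hy).mul ((Jc_diff y hy).comp (f := fun μ : ℂ => -μ) (by fun_prop))
  have h1 := (hd μ).hasDerivAt
  obtain ⟨u, hu, h⟩ := aa_bound y hy (‖μ‖+1)
  have hu0 : ∀ k, 0 ≤ u k := fun k => (norm_nonneg _).trans (h k μ (by simp))
  have hun : Summable fun k => ‖u k‖ := hu.norm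
  have hv := (summable_norm_sum_mul_antidiagonal_of_summable_norm hun hun).of_norm
  have h2 := Complex.hasSum_deriv_of_summable_norm (U := Metric.ball 0 (‖μ‖+1)) (z := μ)
    (F := fun k μ => cc y k * PP k μ) hv
    (fun k => ((PP_diff k).const_mul _).differentiableOn) Metric.isOpen_ball
    (fun k w hw => by
      have hw : ‖w‖ ≤ ‖μ‖ + 1 := by simpa using (Metric.mem_ball.1 hw).le
      simp only [cc]
      rw [← conv_term y hy]
      refine (norm_sum_le _ _).trans (Finset.sum_le_sum fun ij _ => ?_)
      rw [norm_mul]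
      exact mul_le_mul (h _ _ hw) (h _ _ (by simpa using hw)) (norm_nonneg _) (hu0 _)) (by simp)
  have h3 : (fun μ => Jc y μ * Jc y (-μ)) = fun w => ∑' k, cc y k * PP k w := funext (G_series y hy)
  rw [h3] at h1 ⊢
  rw [← h2.tsum_eq] at h1
  refine h1.congr_deriv (tsum_congr fun k => ?_)
  rw [deriv_const_mul _ ((PP_diff k) μ)]

lemma tsum_shift_bb {β : Type*} [AddCommMonoid β] [TopologicalSpace β] [T2Space β] (j : ℕ) (m : ℤ) (g : ℤ → β)
    (hg : ∀ n, bb j n = 0 → g n = 0) :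
    ∑' k : ℤ, g (m + k) = ∑ n ∈ Finset.Icc (-(j:ℤ)) j, g n := by
  refine ((Equiv.addLeft m).tsum_eq g).trans ?_
  exact tsum_eq_sum fun n hn => hg n (bb_zero j n hn)

lemma sum_bb_real (j : ℕ) : ∑ n ∈ Finset.Icc (-(j:ℤ)) j, (bb j n : ℝ) = 4^j := by
  have h := sum_bb j (fun _ => 1)
  simp only [mul_one] at h
  have h2 := Nat.sum_range_choose (2*j)
  have h3 : ∑ n ∈ Finset.Icc (-(j:ℤ)) j, bb j n = ∑ i ∈ Finset.range (2*j+1), (2*j).choose i := by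
    exact_mod_cast h
  rw [h2, pow_mul] at h3
  exact_mod_cast h3

/-- the double family -/
noncomputable def ff (y : ℝ) (m : ℤ) (j : ℕ) (k : ℤ) : ℂ :=
  cc y j * ((bb j (m+k) : ℂ) * ((-1)^(m+k) * (k:ℂ)⁻¹))

lemma inv_int_norm_le (k : ℤ) : ‖((k:ℂ))⁻¹‖ ≤ 1 := by
  rw [norm_inv, Complex.norm_intCast]
  by_cases hk : k = 0
  · simp [hk]
  · exact inv_le_one_of_one_le₀ (by exact_mod_cast Int.one_le_abs hk)

lemma ff_summable (y : ℝ) (m : ℤ) : Summable (Function.uncurry (ff y m)) := by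
  have hmain : Summable fun p : ℕ × ℤ => ‖cc y p.1‖ * (bb p.1 (m + p.2) : ℝ) := by
    refine (summable_prod_of_nonneg fun p => by positivity).2 ⟨fun j => ?_, ?_⟩
    · refine Summable.mul_left (‖cc y j‖) (f := fun k : ℤ => (bb j (m + k) : ℝ)) ?_
      have : Summable fun n : ℤ => (bb j n : ℝ) :=
        summable_of_ne_finset_zero (s := Finset.Icc (-(j:ℤ)) j) fun n hn => by
          rw [bb_zero j n hn, Nat.cast_zero]
      have h2 := this.comp_injective (add_right_injective m)
      simpa only [Function.comp_def] using h2
    · have h1 : ∀ j : ℕ, ∑' k : ℤ, ‖cc y j‖ * (bb j (m + k) : ℝ) = ‖cc y j‖ * 4^j := by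
        intro j
        rw [tsum_mul_left, tsum_shift_bb j m (fun n => (bb j n : ℝ)) (by simp), sum_bb_real]
      simp only [h1]
      refine Summable.of_nonneg_of_le (fun j => by positivity) (fun j => ?_)
        (Real.summable_pow_div_factorial (4 * y^2))
      have h2 : ‖cc y j‖ = (y^2)^j * ((j.factorial:ℝ)^2)⁻¹ := by
        unfold cc
        simp only [norm_mul, norm_pow, norm_inv, norm_neg, norm_one, one_pow, one_mul,
          Complex.norm_natCast, Complex.norm_real, pow_mul]
        simp
      rw [h2, mul_pow, div_eq_mul_inv]
      have h3 : ((j.factorial:ℝ)^2)⁻¹ ≤ (j.factorial:ℝ)⁻¹ := by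
        have : (1:ℝ) ≤ j.factorial := by exact_mod_cast j.factorial_pos
        refine inv_anti₀ (by positivity) ?_
        nlinarith
      calc (y^2)^j * ((j.factorial:ℝ)^2)⁻¹ * 4^j ≤ (y^2)^j * (j.factorial:ℝ)⁻¹ * 4^j := by gcongr
        _ = _ := by ring
  refine Summable.of_norm_bounded hmain fun p => ?_
  obtain ⟨j, k⟩ := p
  simp only [Function.uncurry, ff, norm_mul, norm_zpow, norm_neg, norm_one, one_zpow, one_mul, Complex.norm_natCast]
  have := inv_int_norm_le k
  calc ‖cc y j‖ * ((bb j (m+k) : ℝ) * ‖((k:ℂ))⁻¹‖) ≤ ‖cc y j‖ * ((bb j (m+k) : ℝ) * 1) := by gcongr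
    _ = _ := by ring

lemma negone_zpow_sq (m : ℤ) : ((-1:ℂ)^m) * (-1)^m = 1 := by rw [← mul_zpow]; simp

lemma ff_col (y : ℝ) (hy : 0 < y) (m : ℤ) (k : ℤ) :
    ∑' j, ff y m j k = Jc y ((m + k : ℤ) : ℂ)^2 * (k:ℂ)⁻¹ := by
  have h1 := G_series y hy ((m + k : ℤ) : ℂ)
  rw [Jc_neg_int y hy] at h1
  simp only [PP_int] at h1
  have h2 : Jc y ((m + k : ℤ) : ℂ)^2 = (-1)^(m+k) * ∑' j, cc y j * (bb j (m+k) : ℂ) := by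
    rw [← h1]
    linear_combination -(Jc y ((m + k : ℤ) : ℂ)^2) * negone_zpow_sq (m+k)
  rw [h2, ← tsum_mul_left, ← tsum_mul_right]
  refine tsum_congr fun j => ?_
  unfold ff; ring

lemma ff_row (y : ℝ) (m : ℤ) (j : ℕ) :
    ∑' k, ff y m j k = -(-1)^m * (cc y j * deriv (PP j) m) := by
  unfold ff
  rw [(PP_deriv j m).deriv, tsum_mul_left]
  have h := tsum_shift_bb j m (fun n => (bb j n : ℂ) * ((-1)^n * (((n - m : ℤ)):ℂ)⁻¹)) (by intro n h; simp [h])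
  simp only [add_sub_cancel_left] at h
  rw [h]
  have h2 : ∑ n ∈ Finset.Icc (-(j:ℤ)) j, (bb j n : ℂ) * ((-1)^n * (((n - m : ℤ)):ℂ)⁻¹) =
     - ∑ n ∈ (Finset.Icc (-(j:ℤ)) j).erase m, (bb j n : ℂ) * ((-1)^n / (m - n)) := by
    rw [← Finset.sum_neg_distrib, ← Finset.sum_erase (Finset.Icc (-(j:ℤ)) j) (a := m)
      (f := fun n : ℤ => (bb j n : ℂ) * ((-1)^n * (((n - m : ℤ)):ℂ)⁻¹))]
    · refine Finset.sum_congr rfl fun n _ => ?_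
      rw [← neg_sub (n:ℂ), div_neg, div_eq_mul_inv]
      push_cast; ring
    · simp
  rw [h2]
  linear_combination -(cc y j * ∑ n ∈ (Finset.Icc (-(j:ℤ)) j).erase m, (bb j n : ℂ) * ((-1)^n / (m - n))) * (-negone_zpow_sq m)

theorem bessel_sum_identity (m : ℕ) (x : ℝ) (hx : 0 < x) :
    (∑' k : ℤ, if k = 0 then (0 : ℝ) else besselJ ((m : ℝ) + (k : ℝ)) x ^ 2 / (k : ℝ))
      = -besselJ (m : ℝ) x *
        (deriv (fun ν : ℝ => besselJ ν x) (m : ℝ)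
          + (-1 : ℝ) ^ m * deriv (fun ν : ℝ => besselJ (-ν) x) (m : ℝ)) := by
  have hy : 0 < x/2 := by positivity
  have hG := G_deriv (x/2) hy ((m:ℤ):ℂ)
  set D := ∑' k, cc (x/2) k * deriv (PP k) ((m:ℤ):ℂ) with hD
  -- the left side in the complex numbers
  have hL : (((∑' k : ℤ, if k = 0 then (0 : ℝ) else besselJ ((m : ℝ) + (k : ℝ)) x ^ 2 / (k : ℝ)) : ℝ) : ℂ)
      = -(-1)^m * D := by
    rw [Complex.ofReal_tsum]
    have h1 : ∀ k : ℤ, (((if k = 0 then (0 : ℝ) else besselJ ((m : ℝ) + (k : ℝ)) x ^ 2 / (k : ℝ)) : ℝ) : ℂ)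
        = ∑' j, ff (x/2) m j k := by
      intro k
      rw [ff_col (x/2) hy]
      have h2 := Jc_ofReal x hx ((m:ℝ) + k)
      have h3 : (((m:ℝ) + k : ℝ) : ℂ) = (((m:ℤ) + k : ℤ) : ℂ) := by push_cast; ring
      rw [h3] at h2
      rw [h2]
      split_ifs with hk
      · simp [hk]
      · push_cast; rw [div_eq_mul_inv]
    simp only [h1]
    rw [(ff_summable (x/2) m).tsum_comm]
    simp only [ff_row]
    rw [tsum_mul_left, hD, zpow_natCast]
  -- the real derivatives
  have hJ : ∀ ν : ℝ, besselJ ν x = (Jc (x/2) ν).re := fun ν => by rw [Jc_ofReal x hx]; simp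
  have hdiff : Differentiable ℝ fun ν : ℝ => besselJ ν x := by
    intro ν
    have := (Jc_diff (x/2) hy ν).hasDerivAt.real_of_complex
    simp only [← hJ] at this
    exact this.differentiableAt
  have hd1 := (hdiff m).hasDerivAt
  have hd2 : HasDerivAt (fun ν : ℝ => besselJ (-ν) x) (deriv (fun ν : ℝ => besselJ (-ν) x) (m : ℝ)) (m:ℝ) :=
    (hdiff.comp (f := fun ν : ℝ => -ν) (by fun_prop) (m:ℝ)).hasDerivAt
  have hprod := hd1.mul hd2
  have hG' : HasDerivAt (fun μ => Jc (x/2) μ * Jc (x/2) (-μ)) D (((m:ℝ):ℝ):ℂ) := by simpa using hG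
  have hGr := hG'.real_of_complex
  have hfun : (fun ν : ℝ => (Jc (x/2) ν * Jc (x/2) (-(ν:ℂ))).re) =
      (fun ν : ℝ => besselJ ν x) * (fun ν : ℝ => besselJ (-ν) x) := by
    funext ν
    rw [← Complex.ofReal_neg, Jc_ofReal x hx, Jc_ofReal x hx, ← Complex.ofReal_mul, Complex.ofReal_re]
    rfl
  rw [hfun] at hGr
  have hu := hprod.unique hGr
  have hneg : besselJ (-(m:ℝ)) x = (-1)^m * besselJ m x := by
    have := Jc_neg_nat (x/2) hy m
    have e1 := Jc_ofReal x hx (-(m:ℝ))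
    have e2 := Jc_ofReal x hx (m:ℝ)
    push_cast at e1 e2
    rw [e1, e2] at this
    exact_mod_cast this
  have hre := congrArg Complex.re hL
  rw [Complex.ofReal_re] at hre
  have hre2 : (-(-1:ℂ)^m * D).re = -(-1:ℝ)^m * D.re := by
    rw [show (-(-1:ℂ)^m) = ((-(-1:ℝ)^m : ℝ) : ℂ) by push_cast; ring, Complex.re_ofReal_mul]
  rw [hre, hre2, ← hu, hneg]
  have h1 : ((-1:ℝ)^m) * (-1)^m = 1 := by rw [← mul_pow]; simp
  linear_combination -(besselJ m x * deriv (fun ν : ℝ => besselJ ν x) m) * h1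
end
end
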